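/- The map C_{0,5}(X)(f) = 2X^(5)f′ − 5X^(4)f″ + 10X‴f‴ + 5X″f^(4) is a 1-cocycle on Vect(1) with values in D_{0,5}, and the map C_{−4,1}(X)(f) = 12X^(6)f + 22X^(5)f′ + 5X^(4)f″ − 10X‴f‴ − 5X″f^(4) is a 1-cocycle with values in D_{−4,1}. -/

import Mathlib

noncomputable section

/-- Polynomials over ℝ, identified with polynomial vector fields / densities on the line. -/
abbrev P : Type := Polynomial ℝ

/-- Derivative d/dx. -/
def D : P → P := fun f => Polynomial.derivative f

/-- Iterated derivative: `Dk k f = f^(k)`. -/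
def Dk (k : ℕ) : P → P := D^[k]

/-- Lie bracket on Vect(1): [X,Y] = XY' - X'Y. -/
def br (X Y : P) : P := X * D Y - D X * Y

/-- Action of the vector field X on λ-densities: `L_X^λ f = X f' + λ X' f`. -/
def Lw (l : ℝ) (X f : P) : P := X * D f + Polynomial.C l * D X * f

/-- Action on operators from F_ν to F_μ: `L_X^{ν,μ}(A) = L_X^μ ∘ A - A ∘ L_X^ν`. -/
def LD (nu mu : ℝ) (X : P) (A : P → P) (f : P) : P := Lw mu X (A f) - A (Lw nu X f)

/-- 1-cocycle condition with values in D_{ν,μ}. -/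
def IsCocycle1 (nu mu : ℝ) (c : P → P → P) : Prop :=
  ∀ X Y f, c (br X Y) f = LD nu mu X (c Y) f - LD nu mu Y (c X) f

/-- 2-cocycle condition with values in D_{ν,μ}. -/
def IsCocycle2 (nu mu : ℝ) (o : P → P → P → P) : Prop :=
  ∀ X Y Z f,
    LD nu mu X (o Y Z) f - LD nu mu Y (o X Z) f + LD nu mu Z (o X Y) f
      - o (br X Y) Z f + o (br X Z) Y f - o (br Y Z) X f = 0

/-- Cup product of 1-cochains: `[[C₁,C₂]](X,Y) = C₁(X)∘C₂(Y) - C₁(Y)∘C₂(X)`. -/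
def cup (c₁ c₂ : P → P → P) (X Y f : P) : P := c₁ X (c₂ Y f) - c₁ Y (c₂ X f)

/-- Coboundary of a 1-cochain b with values in D_{ν,μ}. -/
def cob (nu mu : ℝ) (b : P → P → P) (X Y f : P) : P :=
  LD nu mu X (b Y) f - LD nu mu Y (b X) f - b (br X Y) f

/-!
Everything happens one order lower. With values in `D_{λ,λ+4}` there are, for every `λ`, the
coboundary `δ(∂⁴)` of `∂⁴ = (d/dx)⁴` and the 1-cocycle
`c_λ(X)f = −λX⁽⁵⁾f + X⁽⁴⁾f′ − 6X‴f″ − 4X″f‴`. The two cocycles of order five factor through an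
equivariant map `∂ : F_0 → F_1`:
`C_{0,5} = ½(δ(∂⁴) − 5c_1) ∘ ∂` and `C_{−4,1} = ∂ ∘ ½(δ(∂⁴) + 5c_{−4})`.

A vector field is a density of weight `−1`, so `X⁽ʲ⁾f⁽ᵏ⁾` transforms by the Leibniz rule as a
product of densities of weights `j − 1` and `λ + k`, up to the failure of `∂ʲ` and `∂ᵏ` to be
equivariant. That failure involves only derivatives of order at least two of the acting field, so
the coboundary of the cochain `X⁽ʲ⁾f⁽ᵏ⁾` is a combination of terms `(X⁽ᵃ⁾Y⁽ᵇ⁾ − X⁽ᵇ⁾Y⁽ᵃ⁾)f⁽ᶜ⁾`, and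
the terms of `c_λ` cancel.
-/

open Finset Polynomial

section LieDerivative

variable (l : ℝ) (X Y : P)

lemma D_add (f g : P) : D (f + g) = D f + D g := derivative_add

lemma D_sub (f g : P) : D (f - g) = D f - D g := derivative_sub

lemma D_smul (a : ℝ) (f : P) : D (a • f) = a • D f := derivative_smul a f

lemma D_mul (f g : P) : D (f * g) = D f * g + f * D g := derivative_mul

lemma D_C (a : ℝ) : D (C a) = 0 := derivative_C

lemma D_Dk (k : ℕ) (f : P) : D (Dk k f) = Dk (k + 1) f :=
  (Function.iterate_succ_apply' D k f).symm

lemma Dk_D (k : ℕ) (f : P) : Dk k (D f) = Dk (k + 1) f :=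
  (Function.iterate_succ_apply D k f).symm

lemma Dk_zero (f : P) : Dk 0 f = f := rfl

lemma Dk_one (f : P) : Dk 1 f = D f := rfl

lemma Dk_add (k : ℕ) (f g : P) : Dk k (f + g) = Dk k f + Dk k g :=
  iterate_map_add (derivative : P →ₗ[ℝ] P) k f g

lemma Dk_neg (k : ℕ) (f : P) : Dk k (-f) = -Dk k f := iterate_derivative_neg

lemma Dk_sub (k : ℕ) (f g : P) : Dk k (f - g) = Dk k f - Dk k g := iterate_derivative_sub

lemma Dk_smul (k : ℕ) (a : ℝ) (f : P) : Dk k (a • f) = a • Dk k f :=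
  iterate_derivative_smul a f k

lemma Dk_mul (k : ℕ) (f g : P) :
    Dk k (f * g) = ∑ i ∈ range (k + 1), (k.choose i : ℝ) • (Dk i f * Dk (k - i) g) := by
  rw [mul_comm]
  refine (iterate_derivative_mul g f).trans (sum_congr rfl fun i _ => ?_)
  rw [Nat.cast_smul_eq_nsmul, mul_comm]
  rfl

lemma Dk_mul_D (k : ℕ) (X f : P) :
    Dk k (X * D f) = X * Dk (k + 1) f + (k : ℝ) • (D X * Dk k f)
      + ∑ i ∈ range k, (k.choose (i + 2) : ℝ) • (Dk (i + 2) X * Dk (k - 1 - i) f) := by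
  have hextend : Dk k (X * D f) =
      ∑ i ∈ range (k + 2), (k.choose i : ℝ) • (Dk i X * Dk (k + 1 - i) f) := by
    rw [Dk_mul, sum_range_succ _ (k + 1), Nat.choose_succ_self, Nat.cast_zero, zero_smul, add_zero]
    refine sum_congr rfl fun i hi => ?_
    rw [Dk_D, ← Nat.sub_add_comm (mem_range_succ_iff.mp hi)]
  rw [hextend, sum_range_succ', sum_range_succ']
  simp only [Nat.choose_zero_right, Nat.choose_one_right, Nat.cast_one, one_smul, zero_add,
    add_assoc, one_add_one_eq_two, Dk_zero, Dk_one, Nat.sub_zero, Nat.add_sub_cancel,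
    Nat.sub_sub, add_comm 1, Nat.reduceSubDiff]
  abel

lemma Dk_D_mul (k : ℕ) (X f : P) :
    Dk k (D X * f) = D X * Dk k f
      + ∑ i ∈ range k, (k.choose (i + 1) : ℝ) • (Dk (i + 2) X * Dk (k - 1 - i) f) := by
  rw [Dk_mul, sum_range_succ', add_comm]
  simp only [Nat.choose_zero_right, Nat.cast_one, one_smul, Dk_D, zero_add, add_assoc,
    one_add_one_eq_two, Dk_one, Nat.sub_zero, Nat.sub_sub, add_comm 1]

lemma Lw_eq_smul (f : P) : Lw l X f = X * D f + l • (D X * f) := by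
  rw [Lw, smul_eq_C_mul, mul_assoc]

lemma Lw_add (f g : P) : Lw l X (f + g) = Lw l X f + Lw l X g := by
  simp only [Lw, D_add]; ring

lemma Lw_sub (f g : P) : Lw l X (f - g) = Lw l X f - Lw l X g := by
  simp only [Lw, D_sub]; ring

lemma Lw_smul (a : ℝ) (f : P) : Lw l X (a • f) = a • Lw l X f := by
  simp only [Lw, D_smul, mul_smul_comm, smul_add]

lemma Lw_mul (l₁ l₂ : ℝ) (f g : P) :
    Lw (l₁ + l₂) X (f * g) = Lw l₁ X f * g + f * Lw l₂ X g := by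
  simp only [Lw, D_mul, map_add]; ring

lemma Lw_br (f : P) : Lw l (br X Y) f = Lw l X (Lw l Y f) - Lw l Y (Lw l X f) := by
  simp only [Lw, br, D_add, D_sub, D_mul, D_C]; ring

lemma br_eq_Lw_neg_one : br X Y = Lw (-1) X Y := by
  simp only [br, Lw, map_neg, map_one]; ring

lemma LD_Dk (k : ℕ) (f : P) :
    LD l (l + k) X (Dk k) f = -∑ i ∈ range k,
      (k.choose (i + 2) + l * k.choose (i + 1)) • (Dk (i + 2) X * Dk (k - 1 - i) f) := by
  simp only [LD, Lw_eq_smul, Dk_add, Dk_smul, Dk_mul_D, Dk_D_mul, D_Dk, smul_add, add_smul,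
    mul_smul, smul_sum, sum_add_distrib]
  abel

end LieDerivative

/-- `T` intertwines the actions of Vect(1) on `F_ν` and `F_μ`. As for the operators in `LD`,
linearity is not part of the definition. -/
def IsEquivariant (nu mu : ℝ) (T : P → P) : Prop :=
  ∀ X f, T (Lw nu X f) = Lw mu X (T f)

lemma isEquivariant_D : IsEquivariant 0 1 D := by
  intro X f
  simp only [Lw, D_mul, map_zero, zero_mul, add_zero, map_one]
  ring

section Cob

variable (nu mu : ℝ) (X Y f : P)

lemma cob_add (b c : P → P → P) :
    cob nu mu (b + c) X Y f = cob nu mu b X Y f + cob nu mu c X Y f := by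
  simp only [cob, LD, Pi.add_apply, Lw_add]; ring

lemma cob_smul (a : ℝ) (b : P → P → P) : cob nu mu (a • b) X Y f = a • cob nu mu b X Y f := by
  simp only [cob, LD, Pi.smul_apply, Lw_smul, smul_sub]

end Cob

lemma isCocycle1_iff_cob_eq_zero {nu mu : ℝ} {c : P → P → P} :
    IsCocycle1 nu mu c ↔ ∀ X Y f, cob nu mu c X Y f = 0 :=
  forall₃_congr fun _ _ _ => by rw [cob, sub_eq_zero, eq_comm]

namespace IsCocycle1

variable {nu mu rho : ℝ} {b c : P → P → P}

lemma add (hb : IsCocycle1 nu mu b) (hc : IsCocycle1 nu mu c) : IsCocycle1 nu mu (b + c) := by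
  rw [isCocycle1_iff_cob_eq_zero] at hb hc ⊢
  intro X Y f
  rw [cob_add, hb, hc, add_zero]

lemma smul (a : ℝ) (hc : IsCocycle1 nu mu c) : IsCocycle1 nu mu (a • c) := by
  rw [isCocycle1_iff_cob_eq_zero] at hc ⊢
  intro X Y f
  rw [cob_smul, hc, smul_zero]

lemma precomp {T : P → P} (hc : IsCocycle1 nu mu c) (hT : IsEquivariant rho nu T) :
    IsCocycle1 rho mu (fun X f => c X (T f)) := by
  intro X Y f
  simpa only [LD, hT _ f] using hc X Y (T f)

lemma postcomp {T : P → P} (hc : IsCocycle1 nu mu c) (hT : IsEquivariant mu rho T)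
    (hT_sub : ∀ f g, T (f - g) = T f - T g) :
    IsCocycle1 nu rho (fun X f => T (c X f)) := by
  intro X Y f
  simpa only [LD, hT_sub, hT _ _] using congrArg T (hc X Y f)

end IsCocycle1

lemma isCocycle1_LD (nu mu : ℝ) {A : P → P} (hA_sub : ∀ f g, A (f - g) = A f - A g) :
    IsCocycle1 nu mu (fun X => LD nu mu X A) := by
  intro X Y f
  simp only [LD, Lw_br, Lw_sub, hA_sub]
  ring

/-- The bidifferential monomial `X⁽ʲ⁾ f⁽ᵏ⁾`, seen as a 1-cochain on Vect(1). -/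
def bidiff (j k : ℕ) (X f : P) : P := Dk j X * Dk k f

lemma D_bidiff (j k : ℕ) (X f : P) :
    D (bidiff j k X f) = bidiff (j + 1) k X f + bidiff j (k + 1) X f := by
  simp only [bidiff, D_mul, D_Dk]

lemma LD_bidiff (l : ℝ) (j k : ℕ) (X Y f : P) :
    LD l (-1 + j + (l + k)) X (bidiff j k Y) f = Dk j (br X Y) * Dk k f
      + LD (-1) (-1 + j) X (Dk j) Y * Dk k f + Dk j Y * LD l (l + k) X (Dk k) f := by
  simp only [LD, bidiff, Lw_mul, br_eq_Lw_neg_one]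
  ring

lemma Lw_Dk_sub_LD_Dk (j : ℕ) (X Y : P) :
    Lw (-1 + ↑(j + 2)) X (Dk (j + 2) Y) - LD (-1) (-1 + ↑(j + 2)) Y (Dk (j + 2)) X =
      ∑ i ∈ range j, ((j + 2).choose (i + 2) - (j + 2).choose (i + 1) : ℝ) •
        (Dk (i + 2) Y * Dk (j + 1 - i) X) := by
  rw [LD_Dk, sum_range_succ, sum_range_succ, Lw_eq_smul]
  simp only [Nat.choose_self, Nat.choose_succ_self, Nat.choose_succ_self_right,
    Nat.reduceSubDiff, Nat.sub_self, Nat.add_sub_cancel_left, Dk_zero, Dk_one, D_Dk]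
  push_cast
  simp only [neg_one_mul, ← sub_eq_add_neg]
  rw [mul_comm (Dk _ Y) X, mul_comm (Dk _ Y) (D X)]
  module

/-- The 2 × 2 minor of the jets of `X` and `Y` in orders `j` and `k`. The coboundaries of
bidifferential monomials are combinations of these minors. -/
def jetMinor (j k : ℕ) (X Y : P) : P := Dk j X * Dk k Y - Dk k X * Dk j Y

lemma cob_bidiff {l mu : ℝ} {j k : ℕ} (hmu : mu = -1 + ↑(j + 2) + (l + k)) (X Y f : P) :
    cob l mu (bidiff (j + 2) k) X Y f =
      (∑ i ∈ range j, ((j + 2).choose (i + 2) - (j + 2).choose (i + 1) : ℝ) •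
        (Dk (i + 2) Y * Dk (j + 1 - i) X)) * Dk k f
      - ∑ i ∈ range k, (k.choose (i + 2) + l * k.choose (i + 1)) •
        (jetMinor (i + 2) (j + 2) X Y * Dk (k - 1 - i) f) := by
  have hbr : br Y X = -br X Y := by rw [br, br]; ring
  have hcob : cob l mu (bidiff (j + 2) k) X Y f =
      (Lw (-1 + ↑(j + 2)) X (Dk (j + 2) Y)
        - LD (-1) (-1 + ↑(j + 2)) Y (Dk (j + 2)) X) * Dk k f
      + (Dk (j + 2) Y * LD l (l + k) X (Dk k) f - Dk (j + 2) X * LD l (l + k) Y (Dk k) f) := by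
    rw [hmu, cob, LD_bidiff, LD_bidiff, bidiff, hbr, Dk_neg]
    simp only [LD, ← br_eq_Lw_neg_one, hbr, Dk_neg]
    ring
  rw [hcob, Lw_Dk_sub_LD_Dk, LD_Dk, LD_Dk, sub_eq_add_neg _ (∑ i ∈ range k, _), add_right_inj]
  simp only [mul_neg, mul_sum, sub_neg_eq_add, neg_add_eq_sub, ← sum_sub_distrib,
    ← sum_neg_distrib]
  refine sum_congr rfl fun i _ => ?_
  rw [mul_smul_comm, mul_smul_comm, ← smul_sub, ← smul_neg, jetMinor]
  ring_nf

section QuarticCocycle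

variable (l : ℝ) (X Y f : P)

lemma cob_bidiff_five_zero :
    cob l (l + 4) (bidiff 5 0) X Y f = (5 : ℝ) • (jetMinor 4 2 X Y * f) := by
  rw [cob_bidiff (by push_cast; ring)]
  norm_num [sum_range_succ, Nat.choose, jetMinor, Dk_zero, Dk_one]
  simp only [smul_eq_C_mul, map_ofNat]
  ring

lemma cob_bidiff_four_one :
    cob l (l + 4) (bidiff 4 1) X Y f =
      (2 : ℝ) • (jetMinor 3 2 X Y * D f) + l • (jetMinor 4 2 X Y * f) := by
  rw [cob_bidiff (by push_cast; ring)]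
  norm_num [sum_range_succ, Nat.choose, jetMinor, Dk_zero, Dk_one]
  simp only [smul_eq_C_mul, map_ofNat]
  ring

lemma cob_bidiff_three_two :
    cob l (l + 4) (bidiff 3 2) X Y f = (1 + 2 * l) • (jetMinor 3 2 X Y * D f) := by
  rw [cob_bidiff (by push_cast; ring)]
  norm_num [sum_range_succ, Nat.choose, jetMinor, Dk_zero, Dk_one]
  simp only [smul_eq_C_mul, map_add, map_mul, map_one, map_ofNat]
  ring

lemma cob_bidiff_two_three :
    cob l (l + 4) (bidiff 2 3) X Y f =
      -((1 + 3 * l) • (jetMinor 3 2 X Y * D f) + l • (jetMinor 4 2 X Y * f)) := by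
  rw [cob_bidiff (by push_cast; ring)]
  norm_num [sum_range_succ, Nat.choose, jetMinor, Dk_zero, Dk_one]
  simp only [smul_eq_C_mul, map_add, map_mul, map_one, map_ofNat]
  ring

end QuarticCocycle

/-- The 1-cochain `c_λ(X)f = −λX⁽⁵⁾f + X⁽⁴⁾f′ − 6X‴f″ − 4X″f‴` with values in `D_{λ,λ+4}`. -/
def quarticCocycle (l : ℝ) : P → P → P :=
  (-l) • bidiff 5 0 + bidiff 4 1 + (-6 : ℝ) • bidiff 3 2 + (-4 : ℝ) • bidiff 2 3

lemma isCocycle1_quarticCocycle (l : ℝ) : IsCocycle1 l (l + 4) (quarticCocycle l) := by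
  rw [isCocycle1_iff_cob_eq_zero]
  intro X Y f
  simp only [quarticCocycle, cob_add, cob_smul, cob_bidiff_five_zero, cob_bidiff_four_one,
    cob_bidiff_three_two, cob_bidiff_two_three]
  module

/-- The coboundary of `(d/dx)⁴ ∈ D_{λ,λ+4}`, written out in bidifferential monomials. -/
def quarticCoboundary (l : ℝ) : P → P → P :=
  -(l • bidiff 5 0 + (1 + 4 * l) • bidiff 4 1 + (4 + 6 * l) • bidiff 3 2
    + (6 + 4 * l) • bidiff 2 3)

lemma LD_Dk_four (l : ℝ) : (fun X => LD l (l + 4) X (Dk 4)) = quarticCoboundary l := by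
  ext1 X
  ext1 f
  have hLD := LD_Dk l X 4 f
  norm_num [sum_range_succ, Nat.choose] at hLD
  rw [hLD]
  simp only [quarticCoboundary, bidiff, Pi.neg_apply, Pi.add_apply, Pi.smul_apply]
  module

lemma isCocycle1_quarticCoboundary (l : ℝ) : IsCocycle1 l (l + 4) (quarticCoboundary l) :=
  LD_Dk_four l ▸ isCocycle1_LD l (l + 4) (Dk_sub 4)

lemma isCocycle1_one_five :
    IsCocycle1 1 5 ((2 : ℝ) • bidiff 5 0 - (5 : ℝ) • bidiff 4 1
      + (10 : ℝ) • bidiff 3 2 + (5 : ℝ) • bidiff 2 3) := by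
  convert ((isCocycle1_quarticCoboundary 1).smul (1 / 2)).add
    ((isCocycle1_quarticCocycle 1).smul (-5 / 2)) using 1
  · norm_num
  · simp only [quarticCoboundary, quarticCocycle]
    module

lemma isCocycle1_neg_four_zero :
    IsCocycle1 (-4) 0 ((12 : ℝ) • bidiff 5 0 + (10 : ℝ) • bidiff 4 1
      - (5 : ℝ) • bidiff 3 2 - (5 : ℝ) • bidiff 2 3) := by
  convert ((isCocycle1_quarticCoboundary (-4)).smul (1 / 2)).add
    ((isCocycle1_quarticCocycle (-4)).smul (5 / 2)) using 1
  · norm_num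
  · simp only [quarticCoboundary, quarticCocycle]
    module

/-- `C_{0,5}` and `C_{-4,1}` are 1-cocycles on Vect(1). -/
theorem one_cocycles_order_five :
    IsCocycle1 0 5
      (fun X f => 2 * Dk 5 X * D f - 5 * Dk 4 X * Dk 2 f
        + 10 * Dk 3 X * Dk 3 f + 5 * Dk 2 X * Dk 4 f) ∧
    IsCocycle1 (-4) 1
      (fun X f => 12 * Dk 6 X * f + 22 * Dk 5 X * D f + 5 * Dk 4 X * Dk 2 f
        - 10 * Dk 3 X * Dk 3 f - 5 * Dk 2 X * Dk 4 f) := by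
  constructor
  · convert isCocycle1_one_five.precomp isEquivariant_D using 3 with X f
    simp only [Pi.add_apply, Pi.sub_apply, Pi.smul_apply, bidiff, Dk_D, zero_add, Dk_one,
      smul_eq_C_mul, map_ofNat]
    ring
  · convert isCocycle1_neg_four_zero.postcomp isEquivariant_D D_sub using 3 with X f
    simp only [Pi.add_apply, Pi.sub_apply, Pi.smul_apply, D_add, D_sub, D_smul, D_bidiff]
    simp only [bidiff, Dk_zero, zero_add, Dk_one, smul_eq_C_mul, map_ofNat]
    ring
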